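/- Let S ∈ ℤ^{m×n}, u ∈ ℕ^m, with δ_n(S) ≠ 0, and suppose K_u = {x ∈ ℝⁿ : Sx ≤ u} satisfies K_u ∩ ℤⁿ = {0} and every relaxation of K_u obtained by removing one inequality contains a nonzero lattice point. Then 0 ≤ u_i ≤ 2M(n+2)·Δ_n(S)/δ_n(S) for every i, where M = max_i ‖s^{(i)}‖₁. -/

import Mathlib

noncomputable def lamK {m n : ℕ} (S : Matrix (Fin m) (Fin n) ℤ) (g : Fin (n+1) → Fin m)
    (j : Fin (n+1)) : ℝ :=
  (-1) ^ (j : ℕ) * ((S.submatrix (fun t => g (j.succAbove t)) id).det : ℝ)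

lemma lamK_abs {m n : ℕ} (S : Matrix (Fin m) (Fin n) ℤ) (g : Fin (n+1) → Fin m)
    (j : Fin (n+1)) :
    |lamK S g j| = |((S.submatrix (fun t => g (j.succAbove t)) id).det : ℝ)| := by
  simp [lamK, abs_mul]

lemma lamK_sum0 {m n : ℕ} (S : Matrix (Fin m) (Fin n) ℤ) (g : Fin (n+1) → Fin m)
    (c : Fin n) : ∑ j, lamK S g j * (S (g j) c : ℝ) = 0 := by
  have h : (Matrix.of (fun j : Fin (n+1) =>
      (Fin.cons (S (g j) c) (S (g j)) : Fin (n+1) → ℤ))).det = 0 := by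
    apply Matrix.det_zero_of_column_eq (i := 0) (j := c.succ) (Fin.succ_ne_zero c).symm
    intro k
    simp
  rw [Matrix.det_succ_column_zero] at h
  have h2 := congrArg (fun t : ℤ => (t : ℝ)) h
  simp only [Int.cast_sum, Int.cast_mul, Int.cast_pow, Int.cast_neg, Int.cast_one,
    Int.cast_zero] at h2
  rw [← h2]
  refine Finset.sum_congr rfl fun j _ => ?_
  have : (Matrix.of (fun j : Fin (n+1) =>
      (Fin.cons (S (g j) c) (S (g j)) : Fin (n+1) → ℤ))).submatrix j.succAbove Fin.succ
      = S.submatrix (fun t => g (j.succAbove t)) id := by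
    ext a b; simp
  rw [this]
  simp [lamK]
  ring

lemma lamK_sum {m n : ℕ} (S : Matrix (Fin m) (Fin n) ℤ) (g : Fin (n+1) → Fin m)
    (x : Fin n → ℝ) : ∑ j, lamK S g j * ∑ c, (S (g j) c : ℝ) * x c = 0 := by
  simp_rw [Finset.mul_sum]
  rw [Finset.sum_comm]
  apply Finset.sum_eq_zero
  intro c _
  simp_rw [← mul_assoc]
  rw [← Finset.sum_mul, lamK_sum0, zero_mul]

lemma lamK_update {m n : ℕ} (S : Matrix (Fin m) (Fin n) ℤ) (g : Fin (n+1) → Fin m)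
    (l : Fin (n+1)) (i : Fin m) : lamK S (Function.update g l i) l = lamK S g l := by
  simp [lamK, Function.update, Fin.succAbove_ne]

lemma solveK {n : ℕ} (B : Matrix (Fin n) (Fin n) ℤ) (h : (B.det : ℝ) ≠ 0) (y : Fin n → ℝ) :
    ∃ x : Fin n → ℝ, ∀ j, ∑ c, (B j c : ℝ) * x c = y j := by
  let C : Matrix (Fin n) (Fin n) ℝ := B.map (Int.castRingHom ℝ)
  have hC : IsUnit C.det := by
    have : C.det = (B.det : ℝ) := by
      have := (Int.castRingHom ℝ).map_det B
      simpa [C] using this.symm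
    rw [this]; exact isUnit_iff_ne_zero.mpr h
  refine ⟨C⁻¹.mulVec y, fun j => ?_⟩
  have := congrFun (Matrix.mulVec_mulVec y C C⁻¹) j
  rw [Matrix.mul_nonsing_inv _ hC, Matrix.one_mulVec] at this
  rw [← this]; rfl

lemma feasK {m n : ℕ} (S : Matrix (Fin m) (Fin n) ℤ) (g : Fin (n+1) → Fin m)
    (h0 : lamK S g 0 ≠ 0) (y : Fin (n+1) → ℝ) (hy : ∑ j, lamK S g j * y j = 0) :
    ∃ x : Fin n → ℝ, ∀ j, ∑ c, (S (g j) c : ℝ) * x c = y j := by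
  obtain ⟨x, hx⟩ := solveK (S.submatrix (fun t => g ((0 : Fin (n+1)).succAbove t)) id)
    (by intro h; apply h0; simp only [lamK, h, mul_zero]) (fun j => y j.succ)
  have hx' : ∀ j : Fin n, ∑ c, (S (g j.succ) c : ℝ) * x c = y j.succ := by
    intro j; simpa using hx j
  refine ⟨x, fun j => ?_⟩
  refine Fin.cases ?_ hx' j
  have h1 := lamK_sum S g x
  rw [Fin.sum_univ_succ] at h1 hy
  simp_rw [hx'] at h1
  have : lamK S g 0 * (∑ c, (S (g 0) c : ℝ) * x c) = lamK S g 0 * y 0 := by linarith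
  exact mul_left_cancel₀ h0 this

lemma signK {N : ℕ} (a b : Fin N → ℝ) (ha : ∀ j, a j ≠ 0) (j0 : Fin N)
    (hno : ¬ ∃ y : Fin N → ℝ, (∀ j, y j ≤ b j) ∧ ∑ j, a j * y j = 0) :
    ∃ σ : ℝ, (∀ j, |a j| = σ * a j) ∧ ∑ j, |a j| * b j < 0 := by
  set τ := ∑ j, a j * b j with hτ
  have key : ∀ j, τ / a j < 0 := by
    intro j
    by_contra hj
    push Not at hj
    apply hno
    refine ⟨fun k => b k - (if k = j then τ / a j else 0), fun k => ?_, ?_⟩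
    · dsimp only; split_ifs <;> linarith
    · simp only [mul_sub, Finset.sum_sub_distrib, mul_ite, mul_zero, Finset.sum_ite_eq',
        Finset.mem_univ, if_true]
      rw [mul_div_cancel₀ _ (ha j)]
      exact sub_self _
  rcases lt_trichotomy τ 0 with h | h | h
  · have hp : ∀ j, 0 < a j := fun j => by
      by_contra hc
      have := div_nonneg_of_nonpos h.le (not_lt.mp hc)
      linarith [key j]
    refine ⟨1, fun j => by rw [abs_of_pos (hp j), one_mul], ?_⟩
    simp_rw [fun j => abs_of_pos (hp j)]
    exact h
  · have := key j0
    simp [h] at this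
  · have hp : ∀ j, a j < 0 := fun j => by
      by_contra hc
      have := div_nonneg h.le (not_lt.mp hc)
      linarith [key j]
    refine ⟨-1, fun j => by rw [abs_of_neg (hp j)]; ring, ?_⟩
    simp_rw [fun j => abs_of_neg (hp j)]
    simp only [neg_mul, Finset.sum_neg_distrib]
    linarith

/-- Rounding: no real point has slack `M`. -/
lemma roundK {m n : ℕ} (hn : 0 < n) (S : Matrix (Fin m) (Fin n) ℤ) (u : Fin m → ℕ) (M : ℝ)
    (hM : ∀ i, ∑ j, |(S i j : ℝ)| ≤ M)
    (hlat : ∀ z : Fin n → ℤ,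
      (∀ i, ∑ j, (S i j : ℝ) * (z j : ℝ) ≤ (u i : ℝ)) → z = 0)
    (x : Fin n → ℝ) (hx : ∀ i, ∑ j, (S i j : ℝ) * x j ≤ (u i : ℝ) - M) : False := by
  have gen : ∀ z : Fin n → ℤ, (∀ j, |(z j : ℝ) - x j| ≤ 1) → z = 0 := by
    intro z hz
    apply hlat
    intro i
    have h1 : ∑ j, (S i j : ℝ) * (z j : ℝ) - ∑ j, (S i j : ℝ) * x j ≤ ∑ j, |(S i j : ℝ)| := by
      rw [← Finset.sum_sub_distrib]
      apply Finset.sum_le_sum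
      intro j _
      rw [← mul_sub]
      calc _ ≤ |(S i j : ℝ) * ((z j : ℝ) - x j)| := le_abs_self _
        _ = |(S i j : ℝ)| * |(z j : ℝ) - x j| := abs_mul _ _
        _ ≤ |(S i j : ℝ)| * 1 := by gcongr; exact hz j
        _ = _ := mul_one _
    linarith [hM i, hx i]
  have a := gen (fun j => ⌊x j⌋) (fun j => by
    rw [abs_le]; constructor <;> linarith [Int.floor_le (x j), Int.lt_floor_add_one (x j)])
  have b := gen (fun j => ⌊x j⌋ + 1) (fun j => by
    push_cast
    rw [abs_le]; constructor <;> linarith [Int.floor_le (x j), Int.lt_floor_add_one (x j)])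
  have a' := congrFun a ⟨0, hn⟩
  have b' := congrFun b ⟨0, hn⟩
  simp only [Pi.zero_apply] at a' b'
  omega

lemma kerK {m n : ℕ} (hmn : m < n) (S : Matrix (Fin m) (Fin n) ℤ) :
    ∃ z : Fin n → ℤ, z ≠ 0 ∧ ∀ i, ∑ j, S i j * z j = 0 := by
  let T : Matrix (Fin n) (Fin n) ℤ := fun a b => if h : (a : ℕ) < m then S ⟨a, h⟩ b else 0
  have hT : T.det = 0 := Matrix.det_eq_zero_of_row_eq_zero ⟨m, hmn⟩ (fun j => by simp [T])
  obtain ⟨z, hz, hz'⟩ := Matrix.exists_mulVec_eq_zero_iff.mpr hT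
  refine ⟨z, hz, fun i => ?_⟩
  have := congrFun hz' ⟨i, i.2.trans hmn⟩
  simpa [T, Matrix.mulVec, dotProduct] using this

theorem stmt_5 (m n : ℕ) (S : Matrix (Fin m) (Fin n) ℤ) (u : Fin m → ℕ)
    (Δ δ M : ℝ) (hδ : 0 < δ)
    (hsub : ∀ f : Fin n → Fin m, Function.Injective f →
      δ ≤ |((S.submatrix f id).det : ℝ)| ∧ |((S.submatrix f id).det : ℝ)| ≤ Δ)
    (hM : ∀ i, ∑ j, |(S i j : ℝ)| ≤ M)
    (hlat : ∀ z : Fin n → ℤ,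
      (∀ i, ∑ j, (S i j : ℝ) * (z j : ℝ) ≤ (u i : ℝ)) → z = 0)
    (hremove : ∀ i : Fin m, ∃ z : Fin n → ℤ, z ≠ 0 ∧
      ∀ k, k ≠ i → ∑ j, (S k j : ℝ) * (z j : ℝ) ≤ (u k : ℝ)) :
    ∀ i, (0 : ℝ) ≤ (u i : ℝ) ∧ (u i : ℝ) ≤ 2 * M * (n + 2) * (Δ / δ) := by
  intro i
  refine ⟨Nat.cast_nonneg _, ?_⟩
  have hM0 : 0 ≤ M := (Finset.sum_nonneg fun j _ => abs_nonneg _).trans (hM i)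
  obtain ⟨z, hz0, hz⟩ := hremove i
  have hn : 0 < n := by
    rcases Nat.eq_zero_or_pos n with h | h
    · subst h; exact absurd (Subsingleton.elim z 0) hz0
    · exact h
  have hround := roundK hn S u M hM hlat
  have hzi : (u i : ℝ) < ∑ j, (S i j : ℝ) * (z j : ℝ) := by
    by_contra hc
    apply hz0
    apply hlat
    intro k
    by_cases hk : k = i
    · subst hk; exact not_lt.mp hc
    · exact hz k hk
  -- m is at least n+1
  have hmn : n + 1 ≤ m := by
    by_contra hc
    rcases lt_or_eq_of_le (show m ≤ n by omega) with h | h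
    · obtain ⟨y, hy, hy'⟩ := kerK h S
      apply hy
      apply hlat
      intro k
      have : ∑ j, (S k j : ℝ) * (y j : ℝ) = 0 := by exact_mod_cast hy' k
      rw [this]; exact Nat.cast_nonneg _
    · subst h
      have hd := (hsub id Function.injective_id).1
      have hd' : (S.det : ℝ) ≠ 0 := by
        intro h
        rw [Matrix.submatrix_id_id, h, abs_zero] at hd
        linarith
      obtain ⟨x, hx⟩ := solveK S hd' (fun _ => -M)
      apply hround x
      intro k
      rw [hx k]
      have : (0 : ℝ) ≤ u k := Nat.cast_nonneg _
      linarith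
  -- Helly
  obtain ⟨g, hg, hinf⟩ : ∃ g : Fin (n+1) → Fin m, Function.Injective g ∧
      ¬ ∃ x : Fin n → ℝ, ∀ j, ∑ c, (S (g j) c : ℝ) * x c ≤ (u (g j) : ℝ) - M := by
    by_contra hc
    push Not at hc
    have hel := Convex.helly_theorem (𝕜 := ℝ) (E := Fin n → ℝ)
      (F := fun k : Fin m => {x : Fin n → ℝ | ∑ c, (S k c : ℝ) * x c ≤ (u k : ℝ) - M})
      (s := Finset.univ) (by simpa using hmn) ?_ ?_
    · obtain ⟨x, hx⟩ := hel
      simp only [Set.mem_iInter, Set.mem_setOf_eq] at hx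
      exact hround x (fun k => hx k (Finset.mem_univ _))
    · intro k _
      apply convex_halfSpace_le
      constructor
      · intro x y; simp [mul_add, Finset.sum_add_distrib]
      · intro r x; simp only [Pi.smul_apply, smul_eq_mul, Finset.mul_sum]
        exact Finset.sum_congr rfl fun _ _ => by ring
    · intro I _ hI
      have hI' : I.card = n + 1 := by simpa using hI
      obtain ⟨x, hx⟩ := hc (I.orderEmbOfFin hI') (I.orderEmbOfFin hI').injective
      refine ⟨x, ?_⟩
      simp only [Set.mem_iInter, Set.mem_setOf_eq]
      intro k hk
      have : k ∈ Set.range (I.orderEmbOfFin hI') := by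
        rw [Finset.range_orderEmbOfFin]; exact hk
      obtain ⟨j, rfl⟩ := this
      exact hx j
  have hbd : ∀ g : Fin (n+1) → Fin m, Function.Injective g → ∀ j,
      δ ≤ |lamK S g j| ∧ |lamK S g j| ≤ Δ := by
    intro g hg j
    rw [lamK_abs]
    exact hsub _ (fun a b h => Fin.succAbove_right_injective (hg h))
  have hne : ∀ j, lamK S g j ≠ 0 := fun j h => by
    have := (hbd g hg j).1
    rw [h, abs_zero] at this; linarith
  obtain ⟨σ, hσ, hneg⟩ := signK (lamK S g) (fun j => (u (g j) : ℝ) - M) hne 0 (by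
    rintro ⟨y, hy, hy0⟩
    obtain ⟨x, hx⟩ := feasK S g (hne 0) y hy0
    exact hinf ⟨x, fun j => by rw [hx j]; exact hy j⟩)
  set w : Fin (n+1) → ℝ := fun j => |lamK S g j| with hw
  have hw1 : ∀ j, δ ≤ w j := fun j => (hbd g hg j).1
  have hw2 : ∀ j, w j ≤ Δ := fun j => (hbd g hg j).2
  have hw0 : ∀ j, 0 < w j := fun j => hδ.trans_le (hw1 j)
  have hΔ : δ ≤ Δ := (hw1 0).trans (hw2 0)
  have hW : ∑ j, w j * (u (g j) : ℝ) < M * ∑ j, w j := by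
    have : ∑ j, w j * ((u (g j) : ℝ) - M) < 0 := hneg
    simp only [mul_sub, Finset.sum_sub_distrib, ← Finset.sum_mul] at this
    linarith
  have hn0 : (0 : ℝ) ≤ n := Nat.cast_nonneg _
  have hnn : 0 ≤ M * Δ := mul_nonneg hM0 (hδ.le.trans hΔ)
  rw [← mul_div_assoc, le_div_iff₀ hδ]
  by_cases hi : i ∈ Set.range g
  · obtain ⟨l, rfl⟩ := hi
    have h1 : w l * (u (g l) : ℝ) ≤ ∑ j, w j * (u (g j) : ℝ) :=
      Finset.single_le_sum (f := fun j => w j * (u (g j) : ℝ))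
        (fun j _ => mul_nonneg (hw0 j).le (Nat.cast_nonneg _)) (Finset.mem_univ l)
    have h2 : ∑ j, w j ≤ (n + 1) * Δ := by
      calc ∑ j, w j ≤ ∑ _j : Fin (n+1), Δ := Finset.sum_le_sum fun j _ => hw2 j
        _ = _ := by simp
    have h3 : δ * (u (g l) : ℝ) ≤ w l * (u (g l) : ℝ) := by
      gcongr; exact hw1 l
    have h4 : M * ∑ j, w j ≤ M * ((n + 1) * Δ) := by gcongr
    nlinarith [mul_nonneg hn0 hnn]
  · obtain ⟨l, hl⟩ := Finite.exists_max w
    have hg' : Function.Injective (Function.update g l i) := by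
      intro a b hab
      by_cases ha : a = l <;> by_cases hb : b = l
      · rw [ha, hb]
      · subst ha; rw [Function.update_self, Function.update_of_ne hb] at hab
        exact absurd ⟨b, hab.symm⟩ hi
      · subst hb; rw [Function.update_self, Function.update_of_ne ha] at hab
        exact absurd ⟨a, hab⟩ hi
      · rw [Function.update_of_ne ha, Function.update_of_ne hb] at hab
        exact hg hab
    set p : Fin m → ℝ := fun k => ∑ c, (S k c : ℝ) * (z c : ℝ) with hp
    have hs1 : ∑ j, w j * p (g j) = 0 := by
      have := lamK_sum S g (fun c => (z c : ℝ))
      calc ∑ j, w j * p (g j) = σ * ∑ j, lamK S g j * p (g j) := by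
            rw [Finset.mul_sum]
            refine Finset.sum_congr rfl fun j _ => ?_
            simp only [hw, hσ j]; ring
        _ = 0 := by rw [show ∑ j, lamK S g j * p (g j) = 0 from this, mul_zero]
    have hpu : ∀ j, p (g j) ≤ u (g j) := fun j => hz _ (fun h => hi ⟨j, h⟩)
    -- sum of absolute values
    have hs2 : ∑ j, w j * |p (g j)| ≤ 2 * ∑ j, w j * (u (g j) : ℝ) := by
      have : ∑ j, w j * |p (g j)| + ∑ j, w j * p (g j) ≤ 2 * ∑ j, w j * (u (g j) : ℝ) := by
        rw [← Finset.sum_add_distrib, Finset.mul_sum]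
        apply Finset.sum_le_sum
        intro j _
        have h1 : |p (g j)| + p (g j) ≤ 2 * (u (g j) : ℝ) := by
          have : (0 : ℝ) ≤ u (g j) := Nat.cast_nonneg _
          rcases abs_cases (p (g j)) with h | h <;> linarith [hpu j]
        nlinarith [hw0 j]
      linarith
    have hs3 : w l * p i ≤ ∑ j, Δ * |p (g j)| := by
      have h0 := lamK_sum S (Function.update g l i) (fun c => (z c : ℝ))
      change ∑ j, lamK S (Function.update g l i) j * p (Function.update g l i j) = 0 at h0
      rw [← Finset.add_sum_erase _ _ (Finset.mem_univ l), lamK_update, Function.update_self] at h0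
      have h1 : lamK S g l * p i = - ∑ j ∈ Finset.univ.erase l,
          lamK S (Function.update g l i) j * p (Function.update g l i j) := by linarith
      calc w l * p i ≤ |lamK S g l| * |p i| := by
            have := le_abs_self (p i)
            exact mul_le_mul_of_nonneg_left this (abs_nonneg _)
        _ = |lamK S g l * p i| := (abs_mul _ _).symm
        _ ≤ ∑ j ∈ Finset.univ.erase l,
          |lamK S (Function.update g l i) j * p (Function.update g l i j)| := by
            rw [h1, abs_neg]; exact Finset.abs_sum_le_sum_abs _ _
        _ ≤ ∑ j ∈ Finset.univ.erase l, Δ * |p (g j)| := by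
            apply Finset.sum_le_sum
            intro j hj
            rw [Function.update_of_ne (Finset.ne_of_mem_erase hj), abs_mul]
            exact mul_le_mul_of_nonneg_right (hbd _ hg' j).2 (abs_nonneg _)
        _ ≤ ∑ j, Δ * |p (g j)| := by
            apply Finset.sum_le_sum_of_subset_of_nonneg (Finset.erase_subset _ _)
            intro j _ _
            exact mul_nonneg (hδ.le.trans hΔ) (abs_nonneg _)
    have hs4 : δ * ∑ j, |p (g j)| ≤ ∑ j, w j * |p (g j)| := by
      rw [Finset.mul_sum]
      exact Finset.sum_le_sum fun j _ => mul_le_mul_of_nonneg_right (hw1 j) (abs_nonneg _)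
    have hs5 : ∑ j, w j ≤ (n + 1) * w l := by
      calc ∑ j, w j ≤ ∑ _j : Fin (n+1), w l := Finset.sum_le_sum fun j _ => hl j
        _ = _ := by simp
    rw [← Finset.mul_sum] at hs3
    have hΔ0 : 0 < Δ := hδ.trans_le hΔ
    have hs6 : M * ∑ j, w j ≤ M * ((n + 1) * w l) := by gcongr
    have hs7 : δ * ∑ j, |p (g j)| ≤ 2 * (M * ((n + 1) * w l)) := by linarith
    have hs8 : w l * (p i * δ) ≤ w l * (2 * M * (n + 1) * Δ) := by
      have := mul_le_mul_of_nonneg_left hs7 hΔ0.le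
      have := mul_le_mul_of_nonneg_left hs3 hδ.le
      linarith
    have hs9 := le_of_mul_le_mul_left hs8 (hw0 l)
    have hs10 : (u i : ℝ) * δ ≤ p i * δ := by gcongr
    nlinarith
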